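/- For every real z > 0 and every real x with 0 < x < r(z), the series Σ_{k≥1} T(x^k, z^k)/k converges absolutely, and the functional equation T(x,z) − zx + x = x · exp(Σ_{k≥1} T(x^k, z^k)/k) holds. -/

import Mathlib

open SimpleGraph

/-- A rooted tree on vertex set `Fin n`: a connected acyclic simple graph
with a distinguished root vertex. -/
structure RTree (n : ℕ) where
  adj : SimpleGraph (Fin n)
  connected : adj.Connected
  acyclic : adj.IsAcyclic
  root : Fin n

/-- `v` is a leaf of the rooted tree `t`: a vertex of degree one other than the
root, except that in the one-vertex tree the root counts as a leaf. -/
def IsLeafV {n : ℕ} (t : RTree n) (v : Fin n) : Prop :=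
  n = 1 ∨ ((t.adj.neighborSet v).ncard = 1 ∧ v ≠ t.root)

/-- The number of leaves of a rooted tree. -/
noncomputable def numLeaves {n : ℕ} (t : RTree n) : ℕ :=
  Nat.card {v : Fin n // IsLeafV t v}

/-- Root-preserving isomorphism of rooted trees. -/
def treeSetoid (n : ℕ) : Setoid (RTree n) where
  r t t' := ∃ e : t.adj ≃g t'.adj, e t.root = t'.root
  iseqv := by
    constructor
    · intro t; exact ⟨RelIso.refl _, rfl⟩
    · rintro t t' ⟨e, he⟩
      exact ⟨e.symm, by rw [← he]; exact e.symm_apply_apply t.root⟩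
    · rintro a b c ⟨e, he⟩ ⟨f, hf⟩
      exact ⟨e.trans f, by simp [RelIso.trans_apply, he, hf]⟩

/-- `aCount n k` : the number of isomorphism classes of rooted trees with `n`
vertices and exactly `k` leaves. -/
noncomputable def aCount (n k : ℕ) : ℕ :=
  Nat.card (Quotient (Setoid.comap
    (Subtype.val : {t : RTree n // numLeaves t = k} → RTree n)
    (treeSetoid n)))

/-- The real bivariate generating function `T(x,z) = Σ_{n,k} a_{n,k} x^n z^k`. -/
noncomputable def Treal (x z : ℝ) : ℝ :=
  ∑' p : ℕ × ℕ, (aCount p.1 p.2 : ℝ) * x ^ p.1 * z ^ p.2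

/-- `r(ζ)`, the radius of convergence in `x` of `T(x,ζ)` for `ζ > 0`. -/
noncomputable def rFun (ζ : ℝ) : ℝ :=
  sSup {x : ℝ | 0 < x ∧
    Summable (fun p : ℕ × ℕ => (aCount p.1 p.2 : ℝ) * x ^ p.1 * ζ ^ p.2)}

/-!
A rooted tree is determined by the multiset of its branches, the rooted trees hanging from the
neighbours of its root, and every multiset of rooted trees arises in this way. Give an isomorphism
class with `n` vertices and `k` leaves the weight `x ^ n * z ^ k`, so that `T(x, z)` is the sum of
all weights. The number of vertices is one plus the sum over the branches and the number of leaves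
is the sum over the branches, so the weight of a tree is `x` times the product of the weights of its
branches. The one-vertex tree is the only exception: its root is a leaf, and its weight is `x * z`
where the product formula predicts `x`. Hence `T(x, z) - z * x + x` is `x` times the sum, over all
multisets of rooted trees, of the products of weights. That sum is an Euler product
`∏ (1 - w)⁻¹ = exp (∑ₖ (∑ wᵏ) / k)` over the weights `w`, and the `k`-th power of the weight at
`(x, z)` is the weight at `(xᵏ, zᵏ)`.
-/

/-! ### Sums over multisets and over fibers -/

theorem map_univ_eq_map_univ_iff {α ι ι' : Type*} [Fintype ι] [Fintype ι'] {f : ι → α}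
    {g : ι' → α} : Finset.univ.val.map f = Finset.univ.val.map g ↔
      ∃ σ : ι ≃ ι', ∀ i, f i = g (σ i) := by
  classical
  constructor
  · intro h
    have hcard (a : α) : Nonempty ({i // f i = a} ≃ {j // g j = a}) := by
      have hcount := congrArg (Multiset.count a) h
      simp only [Multiset.count_map, eq_comm (a := a)] at hcount
      rw [← Fintype.card_eq, Fintype.card_subtype, Fintype.card_subtype]
      exact hcount
    exact ⟨Equiv.ofFiberEquiv fun a => (hcard a).some,
      fun i => (Equiv.ofFiberEquiv_map _ i).symm⟩
  · rintro ⟨σ, hσ⟩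
    rw [← Multiset.map_univ_val_equiv σ, Multiset.map_map]
    exact Multiset.map_congr rfl fun i _ => hσ i

section FiniteFibers

variable {α β : Type*} {f : α → β} [∀ b, Finite {a // f a = b}] {g : β → ℝ}

theorem hasSum_fiber_of_finite (b : β) :
    HasSum (fun a : {a // f a = b} => g (f a)) (Nat.card {a // f a = b} * g b) := by
  have := Fintype.ofFinite {a // f a = b}
  have hconst : (fun a : {a // f a = b} => g (f a)) = fun _ => g b :=
    funext fun a => congrArg g a.2
  rw [hconst, ← nsmul_eq_mul, Nat.card_eq_fintype_card, ← Finset.card_univ, ← Finset.sum_const]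
  exact hasSum_fintype _

theorem summable_comp_iff_of_finite_fibers :
    Summable (fun a => g (f a)) ↔ Summable fun b => (Nat.card {a // f a = b} : ℝ) * g b := by
  have hfiber (b : β) := hasSum_fiber_of_finite (f := f) (g := fun b => |g b|) b
  calc Summable (fun a => g (f a))
    _ ↔ Summable fun a => |g (f a)| := summable_abs_iff.symm
    _ ↔ Summable fun p : Σ b, {a // f a = b} => |g (f p.2)| :=
      (Equiv.sigmaFiberEquiv f).summable_iff.symm
    _ ↔ Summable fun b => ∑' a : {a // f a = b}, |g (f a)| :=
      (summable_sigma_of_nonneg fun _ => abs_nonneg _).trans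
        (and_iff_right fun b => (hfiber b).summable)
    _ ↔ Summable fun b => |(Nat.card {a // f a = b} : ℝ) * g b| :=
      summable_congr fun b => by rw [(hfiber b).tsum_eq, abs_mul, Nat.abs_cast]
    _ ↔ Summable fun b => (Nat.card {a // f a = b} : ℝ) * g b := summable_abs_iff

theorem tsum_comp_of_finite_fibers (hg : Summable fun a => g (f a)) :
    ∑' a, g (f a) = ∑' b, (Nat.card {a // f a = b} : ℝ) * g b :=
  (((Equiv.sigmaFiberEquiv f).hasSum_iff.2 hg.hasSum).sigma hasSum_fiber_of_finite).tsum_eq.symm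

end FiniteFibers

section EulerProduct

variable {α : Type*}

/-- A multiset supported in `insert b S` amounts to a multiplicity of `b` and a multiset supported
in `S`. -/
def multisetInsertEquiv [DecidableEq α] {b : α} {S : Finset α} (hb : b ∉ S) :
    ℕ × {m : Multiset α // ∀ a ∈ m, a ∈ S} ≃ {m : Multiset α // ∀ a ∈ m, a ∈ insert b S} where
  toFun p := ⟨Multiset.replicate p.1 b + p.2, by
    intro a ha
    rcases Multiset.mem_add.1 ha with h | h
    · exact Multiset.eq_of_mem_replicate h ▸ Finset.mem_insert_self b S
    · exact Finset.mem_insert_of_mem (p.2.2 a h)⟩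
  invFun m := (m.1.count b, ⟨m.1.filter (b ≠ ·), by
    intro a ha
    obtain ⟨ham, hab⟩ := Multiset.mem_filter.1 ha
    exact (Finset.mem_insert.1 (m.2 a ham)).resolve_left hab.symm⟩)
  left_inv := by
    rintro ⟨k, m, hm⟩
    have hbm : b ∉ m := fun h => hb (hm b h)
    have hfilter : m.filter (b ≠ ·) = m :=
      Multiset.filter_eq_self.2 fun a ha hab => hbm (hab ▸ ha)
    simp [Multiset.count_eq_zero_of_notMem hbm, hfilter, Multiset.filter_eq_nil,
      Multiset.mem_replicate]
  right_inv m := by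
    refine Subtype.ext ?_
    dsimp only
    rw [← Multiset.filter_eq, Multiset.filter_add_not]

section NormedField

variable {𝕜 : Type*} [NormedField 𝕜] {w : α → 𝕜}

theorem norm_lt_one_of_summable_prod_map (hw : Summable fun m : Multiset α => ‖(m.map w).prod‖)
    (a : α) : ‖w a‖ < 1 := by
  have hinj : Function.Injective fun n : ℕ => Multiset.replicate n a :=
    Multiset.replicate_left_injective a
  have hgeom : Summable fun n : ℕ => ‖w a‖ ^ n := (hw.comp_injective hinj).congr fun n => by simp
  simpa using summable_geometric_iff_norm_lt_one.1 hgeom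

theorem summable_norm_of_summable_prod_map
    (hw : Summable fun m : Multiset α => ‖(m.map w).prod‖) : Summable fun a => ‖w a‖ := by
  have hinj : Function.Injective fun a : α => ({a} : Multiset α) := fun _ _ h =>
    Multiset.singleton_inj.1 h
  exact (hw.comp_injective hinj).congr fun a => by simp

variable [CompleteSpace 𝕜]

theorem tsum_prod_map_of_forall_mem (hw : Summable fun m : Multiset α => ‖(m.map w).prod‖)
    (S : Finset α) : ∑' m : {m : Multiset α // ∀ a ∈ m, a ∈ S}, (m.1.map w).prod =
      ∏ a ∈ S, (1 - w a)⁻¹ := by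
  classical
  induction S using Finset.induction_on with
  | empty =>
    have hzero (m : {m : Multiset α // ∀ a ∈ m, a ∈ (∅ : Finset α)}) : m.1 = 0 :=
      Multiset.eq_zero_of_forall_notMem fun a ha => Finset.notMem_empty a (m.2 a ha)
    have : Unique {m : Multiset α // ∀ a ∈ m, a ∈ (∅ : Finset α)} :=
      ⟨⟨⟨0, by simp⟩⟩, fun m => Subtype.ext ((hzero m).trans (hzero _).symm)⟩
    rw [tsum_fintype, Fintype.sum_unique, hzero, Multiset.map_zero, Multiset.prod_zero,
      Finset.prod_empty]
  | insert b S hb ih =>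
    have hgeom : Summable fun n : ℕ => ‖w b ^ n‖ :=
      summable_norm_geometric_of_norm_lt_one (norm_lt_one_of_summable_prod_map hw b)
    rw [Finset.prod_insert hb, ← ih,
      ← tsum_geometric_of_norm_lt_one (norm_lt_one_of_summable_prod_map hw b),
      tsum_mul_tsum_of_summable_norm hgeom (hw.subtype _), ← (multisetInsertEquiv hb).tsum_eq]
    simp [multisetInsertEquiv]

theorem hasProd_inv_one_sub_of_summable_prod_map
    (hw : Summable fun m : Multiset α => ‖(m.map w).prod‖) :
    HasProd (fun a => (1 - w a)⁻¹) (∑' m : Multiset α, (m.map w).prod) := by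
  classical
  have hfinite (S : Finset α) : ∏ a ∈ S, (1 - w a)⁻¹ =
      ∑' m : Multiset α, {m | ∀ a ∈ m, a ∈ S}.indicator (fun m => (m.map w).prod) m := by
    rw [← tsum_prod_map_of_forall_mem hw, ← tsum_subtype]
    rfl
  simp only [HasProd, hfinite]
  refine tendsto_tsum_of_dominated_convergence hw (fun m => ?_)
    (.of_forall fun S m => norm_indicator_le_norm_self _ _)
  refine tendsto_const_nhds.congr' ?_
  filter_upwards [Filter.eventually_ge_atTop m.toFinset] with S hS
  have hmem : m ∈ {m : Multiset α | ∀ a ∈ m, a ∈ S} := fun a ha => hS (Multiset.mem_toFinset.2 ha)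
  exact (Set.indicator_of_mem hmem fun m => (m.map w).prod).symm

end NormedField

section Real

variable {w : α → ℝ}

theorem summable_pow_div_of_summable (hw : Summable w) (hw1 : ∀ a, |w a| < 1) :
    Summable fun p : α × ℕ => w p.1 ^ (p.2 + 1) / (p.2 + 1) := by
  have hlog (a : α) : HasSum (fun n : ℕ => |w a| ^ (n + 1) / (n + 1)) (-Real.log (1 - |w a|)) :=
    Real.hasSum_pow_div_log_of_abs_lt_one (by rw [abs_abs]; exact hw1 a)
  have hnorm : Summable fun p : α × ℕ => |w p.1| ^ (p.2 + 1) / (p.2 + 1) := by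
    have hnonneg (p : α × ℕ) : 0 ≤ |w p.1| ^ (p.2 + 1) / (p.2 + 1) := by positivity
    refine (summable_prod_of_nonneg hnonneg).2 ⟨fun a => (hlog a).summable, ?_⟩
    simp only [(hlog _).tsum_eq]
    simpa [← sub_eq_add_neg] using (Real.summable_log_one_add_of_summable hw.abs.neg).neg
  refine hnorm.of_norm_bounded fun p => le_of_eq ?_
  have hp : (0 : ℝ) ≤ (p.2 : ℝ) + 1 := by positivity
  rw [norm_div, norm_pow, Real.norm_eq_abs, Real.norm_of_nonneg hp]

theorem hasSum_tsum_pow_div_of_summable (hw : Summable w) (hw1 : ∀ a, |w a| < 1) :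
    HasSum (fun k : ℕ => (∑' a, w a ^ (k + 1)) / (k + 1)) (∑' a, Real.log (1 - w a)⁻¹) := by
  have hsum := summable_pow_div_of_summable hw hw1
  have hlog (a : α) : ∑' k : ℕ, w a ^ (k + 1) / (k + 1) = Real.log (1 - w a)⁻¹ := by
    rw [(Real.hasSum_pow_div_log_of_abs_lt_one (hw1 a)).tsum_eq, Real.log_inv]
  have hcomm : ∑' (k : ℕ) (a : α), w a ^ (k + 1) / (k + 1) =
      ∑' (a : α) (k : ℕ), w a ^ (k + 1) / (k + 1) :=
    Summable.tsum_comm (f := fun a (k : ℕ) => w a ^ (k + 1) / ((k : ℝ) + 1)) hsum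
  simp only [← hlog, ← tsum_div_const, ← hcomm]
  exact hsum.prod_symm.prod.hasSum

theorem tsum_prod_map_eq_exp (hw : Summable fun m : Multiset α => ‖(m.map w).prod‖) :
    ∑' m : Multiset α, (m.map w).prod = Real.exp (∑' k : ℕ, (∑' a, w a ^ (k + 1)) / (k + 1)) := by
  have hw1 := norm_lt_one_of_summable_prod_map hw
  have hsum := (summable_norm_of_summable_prod_map hw).of_norm
  have hpos (a : α) : 0 < (1 - w a)⁻¹ := inv_pos.2 (sub_pos.2 (abs_lt.1 (hw1 a)).2)
  have hlog : Summable fun a => Real.log (1 - w a)⁻¹ := by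
    simpa only [Real.log_inv, sub_eq_add_neg] using
      (Real.summable_log_one_add_of_summable hsum.neg).neg
  rw [(hasSum_tsum_pow_div_of_summable hsum hw1).tsum_eq, Real.rexp_tsum_eq_tprod hpos hlog]
  exact (hasProd_inv_one_sub_of_summable_prod_map hw).tprod_eq.symm

end Real

end EulerProduct

/-! ### Grafting rooted graphs onto a new root -/

section Graft

variable {ι ι' : Type*} {V : ι → Type*} {V' : ι' → Type*}

theorem exists_equiv_fiber_of_equiv_sigma (e : (Σ i, V i) ≃ Σ i, V' i) (σ : ι ≃ ι')
    (h : ∀ p, (e p).1 = σ p.1) : ∃ φ : ∀ i, V i ≃ V' (σ i), ∀ i a, e ⟨i, a⟩ = ⟨σ i, φ i a⟩ := by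
  have hfiber (i : ι) (p : Σ i, V i) : p.1 = i ↔ (e p).1 = σ i := by
    rw [h, σ.apply_eq_iff_eq]
  refine ⟨fun i => (Equiv.sigmaSubtype i).symm.trans <|
    (e.subtypeEquiv (hfiber i)).trans (Equiv.sigmaSubtype (σ i)), fun i a => ?_⟩
  exact congrArg Subtype.val ((Equiv.sigmaSubtype (σ i)).symm_apply_apply
    ⟨e ⟨i, a⟩, (hfiber i _).1 rfl⟩).symm

theorem reachable_of_forall_adj {α β : Type*} {G : SimpleGraph α} {H : SimpleGraph β} {f : α → β}
    (hf : ∀ u v, G.Adj u v → H.Reachable (f u) (f v)) {u v : α} (huv : G.Reachable u v) :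
    H.Reachable (f u) (f v) := by
  rw [reachable_iff_reflTransGen] at huv
  induction huv with
  | refl => exact Reachable.rfl
  | tail _ hvw ih => exact ih.trans (hf _ _ hvw)

theorem eq_of_reachable_of_forall_adj {α β : Type*} {G : SimpleGraph α} {f : α → β}
    (hf : ∀ u v, G.Adj u v → f u = f v) {u v : α} (huv : G.Reachable u v) : f u = f v :=
  reachable_bot.1 (reachable_of_forall_adj (fun u v h => reachable_bot.2 (hf u v h)) huv)

/-- Adjacency in the graft of rooted graphs `(G i, r i)`: a new vertex `none` is joined to each
root. -/
inductive GraftAdj (G : ∀ i, SimpleGraph (V i)) (r : ∀ i, V i) :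
    Option (Σ i, V i) → Option (Σ i, V i) → Prop
  | none_some (i : ι) : GraftAdj G r none (some ⟨i, r i⟩)
  | some_none (i : ι) : GraftAdj G r (some ⟨i, r i⟩) none
  | some_some {i : ι} {a b : V i} (h : (G i).Adj a b) : GraftAdj G r (some ⟨i, a⟩) (some ⟨i, b⟩)

/-- The graph obtained from the disjoint union of the rooted graphs `(G i, r i)` by joining their
roots to a new vertex `none`, which serves as the root of the result. -/
def graft (G : ∀ i, SimpleGraph (V i)) (r : ∀ i, V i) : SimpleGraph (Option (Σ i, V i)) where
  Adj := GraftAdj G r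
  symm := ⟨by rintro _ _ (i | i | h); exacts [.some_none i, .none_some i, .some_some h.symm]⟩
  loopless := ⟨by rintro _ (_ | _ | h); exact h.ne rfl⟩

variable (G : ∀ i, SimpleGraph (V i)) (r : ∀ i, V i)
  (G' : ∀ i, SimpleGraph (V' i)) (r' : ∀ i, V' i)

@[simp]
theorem graft_adj_none_some {i : ι} {a : V i} :
    (graft G r).Adj none (some ⟨i, a⟩) ↔ a = r i :=
  ⟨by rintro ⟨_⟩; rfl, by rintro rfl; exact .none_some i⟩

@[simp]
theorem graft_adj_some_none {i : ι} {a : V i} :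
    (graft G r).Adj (some ⟨i, a⟩) none ↔ a = r i := by
  rw [adj_comm, graft_adj_none_some]

@[simp]
theorem graft_adj_some_some {i : ι} {a b : V i} :
    (graft G r).Adj (some ⟨i, a⟩) (some ⟨i, b⟩) ↔ (G i).Adj a b :=
  ⟨by rintro (_ | _ | h); exact h, .some_some⟩

variable {G r G' r'}

theorem fst_eq_of_graft_adj {p q : Σ i, V i} (h : (graft G r).Adj (some p) (some q)) :
    p.1 = q.1 := by
  rcases h with _ | _ | _
  rfl

theorem graft_connected (hG : ∀ i, (G i).Connected) : (graft G r).Connected := by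
  refine connected_iff_exists_forall_reachable _ |>.2 ⟨none, ?_⟩
  rintro (_ | ⟨i, a⟩)
  · exact Reachable.rfl
  · let inclusion : G i →g graft G r := ⟨fun a => some ⟨i, a⟩, .some_some⟩
    exact ((graft_adj_none_some G r).2 rfl).reachable.trans <|
      ((hG i).preconnected (r i) a).map inclusion

theorem graft_isBridge_none_some (i : ι) : (graft G r).IsBridge s(none, some ⟨i, r i⟩) := by
  rw [isBridge_iff]
  intro h
  have hinv : ∀ u v, ((graft G r).deleteEdges {s(none, some ⟨i, r i⟩)}).Adj u v →
      (u.map Sigma.fst = some i) = (v.map Sigma.fst = some i) := by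
    intro u v huv
    obtain ⟨huv, hne⟩ := deleteEdges_adj.1 huv
    rcases huv with j | j | _
    · have : j ≠ i := by rintro rfl; exact hne rfl
      simpa
    · have : j ≠ i := by rintro rfl; exact hne Sym2.eq_swap
      simpa
    · rfl
  simpa using eq_of_reachable_of_forall_adj hinv h

-- Collapsing everything outside the `i`-th branch to `r i` would turn a path avoiding the edge into
-- one inside `G i`.
theorem graft_isBridge_some_some {i : ι} {a b : V i} (hab : (G i).IsBridge s(a, b)) :
    (graft G r).IsBridge s(some ⟨i, a⟩, some ⟨i, b⟩) := by
  classical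
  rw [isBridge_iff] at hab ⊢
  refine fun h => hab ?_
  let collapse : Option (Σ i, V i) → V i
    | none => r i
    | some ⟨j, c⟩ => if hj : j = i then hj ▸ c else r i
  have hcollapse : ∀ u v, ((graft G r).deleteEdges {s(some ⟨i, a⟩, some ⟨i, b⟩)}).Adj u v →
      ((G i).deleteEdges {s(a, b)}).Reachable (collapse u) (collapse v) := by
    intro u v huv
    obtain ⟨huv, hne⟩ := deleteEdges_adj.1 huv
    rcases huv with j | j | @⟨j, c, d, hcd⟩
    · by_cases hj : j = i <;> [subst hj; skip] <;> simp [collapse, *]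
    · by_cases hj : j = i <;> [subst hj; skip] <;> simp [collapse, *]
    · by_cases hj : j = i
      · subst hj
        refine Adj.reachable (deleteEdges_adj.2 ⟨by simpa [collapse] using hcd, ?_⟩)
        simpa [collapse] using hne
      · simp [collapse, hj]
  simpa [collapse] using reachable_of_forall_adj hcollapse h

theorem graft_isAcyclic (hG : ∀ i, (G i).IsAcyclic) : (graft G r).IsAcyclic := by
  rw [isAcyclic_iff_forall_adj_isBridge]
  rintro _ _ (i | i | hab)
  · exact graft_isBridge_none_some i
  · rw [Sym2.eq_swap]
    exact graft_isBridge_none_some i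
  · exact graft_isBridge_some_some (isAcyclic_iff_forall_adj_isBridge.1 (hG _) hab)

theorem graft_isTree (hG : ∀ i, (G i).IsTree) : (graft G r).IsTree :=
  ⟨graft_connected fun i => (hG i).connected, graft_isAcyclic fun i => (hG i).isAcyclic⟩

theorem exists_graft_iso (σ : ι ≃ ι') (φ : ∀ i, G i ≃g G' (σ i))
    (hφ : ∀ i, φ i (r i) = r' (σ i)) : ∃ e : graft G r ≃g graft G' r', e none = none := by
  let e : Option (Σ i, V i) ≃ Option (Σ i, V' i) :=
    (Equiv.sigmaCongr σ fun i => (φ i).toEquiv).optionCongr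
  have he_none : e none = none := rfl
  have he_some (i : ι) (a : V i) : e (some ⟨i, a⟩) = some ⟨σ i, φ i a⟩ := rfl
  refine ⟨⟨e, @fun u v => ?_⟩, he_none⟩
  rcases u with _ | ⟨i, a⟩ <;> rcases v with _ | ⟨j, b⟩
  · simp [he_none]
  · simp [he_none, he_some, ← hφ]
  · simp [he_none, he_some, ← hφ]
  · rw [he_some, he_some]
    constructor <;> intro h <;> obtain rfl : i = j := by simpa using fst_eq_of_graft_adj h
    · exact (graft_adj_some_some G r).2 <|
        (φ i).map_adj_iff.1 ((graft_adj_some_some G' r').1 h)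
    · exact (graft_adj_some_some G' r').2 <|
        (φ i).map_adj_iff.2 ((graft_adj_some_some G r).1 h)

theorem fst_eq_of_graft_iso (hG : ∀ i, (G i).Preconnected) {e : (Σ i, V i) ≃ Σ i, V' i}
    (he : ∀ p q, (graft G r).Adj (some p) (some q) →
      (graft G' r').Adj (some (e p)) (some (e q))) (i : ι) (a b : V i) :
    (e ⟨i, a⟩).1 = (e ⟨i, b⟩).1 :=
  eq_of_reachable_of_forall_adj (f := fun a => (e ⟨i, a⟩).1)
    (fun _ _ h => fst_eq_of_graft_adj (he _ _ ((graft_adj_some_some G r).2 h))) (hG i a b)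

theorem exists_iso_of_graft_iso (hG : ∀ i, (G i).Preconnected) (hG' : ∀ i, (G' i).Preconnected)
    (e : graft G r ≃g graft G' r') (he_none : e none = none) :
    ∃ (σ : ι ≃ ι') (φ : ∀ i, G i ≃g G' (σ i)), ∀ i, φ i (r i) = r' (σ i) := by
  let e' : (Σ i, V i) ≃ Σ i, V' i := e.toEquiv.removeNone
  have he_some (p : Σ i, V i) : e (some p) = some (e' p) := by
    refine (Equiv.removeNone_some e.toEquiv (Option.ne_none_iff_exists'.1 fun h => ?_)).symm
    exact Option.some_ne_none p (e.injective (h.trans he_none.symm))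
  have he_adj (p q : Σ i, V i) : (graft G' r').Adj (some (e' p)) (some (e' q)) ↔
      (graft G r).Adj (some p) (some q) := by
    rw [← he_some, ← he_some, e.map_adj_iff]
  have hfst := fst_eq_of_graft_iso hG fun p q => (he_adj p q).2
  have hfst_symm := fst_eq_of_graft_iso (e := e'.symm) hG' fun p q h =>
    (he_adj _ _).1 (by simpa using h)
  let σ : ι ≃ ι' :=
    { toFun i := (e' ⟨i, r i⟩).1
      invFun j := (e'.symm ⟨j, r' j⟩).1
      left_inv i := by
        dsimp only
        rw [hfst_symm _ _ (e' ⟨i, r i⟩).2, Sigma.eta, e'.symm_apply_apply]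
      right_inv j := by
        dsimp only
        rw [hfst _ _ (e'.symm ⟨j, r' j⟩).2, Sigma.eta, e'.apply_symm_apply] }
  obtain ⟨φ, hφ⟩ := exists_equiv_fiber_of_equiv_sigma e' σ fun p => hfst p.1 p.2 (r p.1)
  refine ⟨σ, fun i => ⟨φ i, @fun a b => ?_⟩, fun i => ?_⟩
  · rw [← graft_adj_some_some G' r', ← hφ, ← hφ, he_adj, graft_adj_some_some]
  · change φ i (r i) = _
    rw [← graft_adj_none_some G' r', ← hφ, ← he_some, ← he_none, e.map_adj_iff,
      graft_adj_none_some]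

end Graft

section Leaf

variable {V W : Type*} {G : SimpleGraph V} {H : SimpleGraph W} {r v : V}

/-- The leaves of a graph rooted at `r`: the vertices of degree one other than `r`, except that the
only vertex of a one-vertex graph counts as a leaf. -/
def leafSet (G : SimpleGraph V) (r : V) : Set V :=
  {v | Subsingleton V ∨ ((G.neighborSet v).ncard = 1 ∧ v ≠ r)}

theorem apply_mem_leafSet_iff (e : G ≃g H) : e v ∈ leafSet H (e r) ↔ v ∈ leafSet G r := by
  have hcard : (H.neighborSet (e v)).ncard = (G.neighborSet v).ncard :=
    (Nat.card_congr (e.mapNeighborSet v)).symm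
  simp only [leafSet, Set.mem_ofPred_eq, e.toEquiv.subsingleton_congr, hcard, ne_eq,
    e.injective.eq_iff]

theorem ncard_leafSet_eq_of_iso (e : G ≃g H) : (leafSet H (e r)).ncard = (leafSet G r).ncard :=
  (Nat.card_congr (e.toEquiv.subtypeEquiv fun _ => (apply_mem_leafSet_iff e).symm)).symm

theorem leafSet_of_subsingleton [Subsingleton V] : leafSet G r = Set.univ :=
  Set.eq_univ_of_forall fun _ => Or.inl ‹_›

theorem root_notMem_leafSet [Nontrivial V] : r ∉ leafSet G r := by
  rintro (h | ⟨-, hr⟩)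
  · exact not_subsingleton V h
  · exact hr rfl

theorem mem_leafSet_iff_of_ne [Nontrivial V] (hv : v ≠ r) :
    v ∈ leafSet G r ↔ (G.neighborSet v).ncard = 1 := by
  simp [leafSet, hv, not_subsingleton V]

theorem root_mem_leafSet_iff : r ∈ leafSet G r ↔ Subsingleton V := by
  simp [leafSet]

theorem neighborSet_eq_empty_iff_subsingleton (hG : G.Preconnected) :
    G.neighborSet v = ∅ ↔ Subsingleton V := by
  rw [← not_nontrivial_iff_subsingleton, ← not_iff_not, not_not, ← ne_eq,
    ← Set.nonempty_iff_ne_empty]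
  constructor
  · rintro ⟨u, hu⟩
    exact ⟨v, u, hu.ne⟩
  · intro
    exact hG.exists_adj_of_nontrivial v

end Leaf

section GraftLeaf

variable {ι : Type*} {V : ι → Type*} {G : ∀ i, SimpleGraph (V i)} {r : ∀ i, V i}

theorem graft_adj_some_iff {i : ι} {a : V i} {p : Σ i, V i} :
    (graft G r).Adj (some ⟨i, a⟩) (some p) ↔ ∃ b, (G i).Adj a b ∧ ⟨i, b⟩ = p := by
  constructor
  · rintro (_ | _ | h)
    exact ⟨_, h, rfl⟩
  · rintro ⟨b, hab, rfl⟩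
    exact .some_some hab

theorem neighborSet_graft_root (i : ι) : (graft G r).neighborSet (some ⟨i, r i⟩) =
    insert none ((fun a => some ⟨i, a⟩) '' (G i).neighborSet (r i)) := by
  ext (_ | p) <;> simp [graft_adj_some_iff]

theorem neighborSet_graft_of_ne_root {i : ι} {a : V i} (ha : a ≠ r i) :
    (graft G r).neighborSet (some ⟨i, a⟩) = (fun b => some ⟨i, b⟩) '' (G i).neighborSet a := by
  ext (_ | p) <;> simp [graft_adj_some_iff, ha]

theorem some_mem_leafSet_graft_iff [∀ i, Finite (V i)] {i : ι} (hG : (G i).Preconnected)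
    {a : V i} : some ⟨i, a⟩ ∈ leafSet (graft G r) none ↔ a ∈ leafSet (G i) (r i) := by
  have : Nontrivial (Option (Σ i, V i)) := ⟨none, some ⟨i, a⟩, by simp⟩
  have hinj : Function.Injective fun b : V i => some (⟨i, b⟩ : Σ i, V i) := fun b c h => by
    simpa using h
  rw [mem_leafSet_iff_of_ne (Option.some_ne_none _)]
  by_cases ha : a = r i
  · subst ha
    rw [root_mem_leafSet_iff, ← neighborSet_eq_empty_iff_subsingleton hG, neighborSet_graft_root,
      Set.ncard_insert_of_notMem (by simp), Set.ncard_image_of_injective _ hinj,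
      Nat.add_eq_right, Set.ncard_eq_zero]
  · have : Nontrivial (V i) := ⟨a, r i, ha⟩
    rw [mem_leafSet_iff_of_ne ha, neighborSet_graft_of_ne_root ha,
      Set.ncard_image_of_injective _ hinj]

theorem ncard_leafSet_graft [Fintype ι] [Nonempty ι] [∀ i, Finite (V i)]
    (hG : ∀ i, (G i).Preconnected) :
    (leafSet (graft G r) none).ncard = ∑ i, (leafSet (G i) (r i)).ncard := by
  have : Nontrivial (Option (Σ i, V i)) := ⟨none, some ⟨Classical.arbitrary ι, r _⟩, by simp⟩
  let f (p : Σ i, leafSet (G i) (r i)) : Option (Σ i, V i) := some ⟨p.1, p.2⟩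
  have hf : Function.Injective f :=
    (Option.some_injective _).comp (Function.injective_id.sigma_map fun _ => Subtype.val_injective)
  have hrange : leafSet (graft G r) none = Set.range f := by
    ext (_ | ⟨i, a⟩)
    · simp [root_notMem_leafSet, f]
    · simp [some_mem_leafSet_graft_iff (hG i), f]
  rw [hrange, Set.ncard_range_of_injective hf, Nat.card_sigma]
  simp only [Nat.card_coe_set_eq]

end GraftLeaf

section DeleteVertex

variable {V : Type*} {G : SimpleGraph V} {r : V}

/-- The graph obtained from `G` by deleting the vertex `r`. When `G` is a tree with root `r`, its
connected components are the branches at the root. -/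
def deleteVertex (G : SimpleGraph V) (r : V) : SimpleGraph {v // v ≠ r} :=
  G.comap Subtype.val

theorem exists_adj_reachable_deleteVertex (hG : G.Preconnected) (v : {v // v ≠ r}) :
    ∃ u, G.Adj r u.1 ∧ (deleteVertex G r).Reachable u v := by
  obtain ⟨v, hv⟩ := v
  have hrv := hG r v
  rw [reachable_iff_reflTransGen] at hrv
  induction hrv with
  | refl => exact (hv rfl).elim
  | @tail w v _ hwv ih =>
    by_cases hw : w = r
    · exact ⟨⟨v, hv⟩, hw ▸ hwv, Reachable.rfl⟩
    · obtain ⟨u, hu, huw⟩ := ih hw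
      exact ⟨u, hu, huw.trans (Adj.reachable hwv)⟩

theorem eq_of_adj_of_reachable_deleteVertex (hG : G.IsAcyclic) {u v : {v // v ≠ r}}
    (hu : G.Adj r u) (hv : G.Adj r v) (huv : (deleteVertex G r).Reachable u v) : u = v := by
  by_contra hne
  refine isBridge_iff.1 (isAcyclic_iff_forall_adj_isBridge.1 hG hu) ?_
  have hrv : (G.deleteEdges {s(r, u.1)}).Adj r v :=
    deleteEdges_adj.2 ⟨hv, fun h => hne <| Subtype.ext (Sym2.congr_right.1 h).symm⟩
  refine hrv.reachable.trans (reachable_of_forall_adj (fun a b hab => ?_) huv.symm)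
  refine Adj.reachable (deleteEdges_adj.2 ⟨hab, fun h => ?_⟩)
  have hr : r ∈ s(a.1, b.1) := h ▸ Sym2.mem_mk_left _ _
  rcases Sym2.mem_iff.1 hr with ha | hb
  · exact a.2 ha.symm
  · exact b.2 hb.symm

theorem exists_adj_mem_connectedComponent (hG : G.Preconnected)
    (C : (deleteVertex G r).ConnectedComponent) : ∃ u : C, G.Adj r u.1 := by
  induction C using ConnectedComponent.ind with | h v
  obtain ⟨u, hu, huv⟩ := exists_adj_reachable_deleteVertex hG v
  exact ⟨⟨u, ConnectedComponent.sound huv⟩, hu⟩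

theorem exists_graft_connectedComponent_iso (hG : G.IsAcyclic)
    {ρ : ∀ C : (deleteVertex G r).ConnectedComponent, C} (hρ : ∀ C, G.Adj r (ρ C).1) :
    ∃ e : graft (fun C => C.toSimpleGraph) ρ ≃g G, e none = r := by
  classical
  let e : Option (Σ C : (deleteVertex G r).ConnectedComponent, C) ≃ V :=
    (Equiv.sigmaFiberEquiv _).optionCongr.trans (Equiv.optionSubtypeNe r)
  have he_none : e none = r := Equiv.optionSubtypeNe_none r
  have he_some (p) : e (some p) = p.2.1.1 := rfl
  have hroot (C : (deleteVertex G r).ConnectedComponent) (a : C) : G.Adj r a.1 ↔ a = ρ C := by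
    refine ⟨fun h => Subtype.ext ?_, by rintro rfl; exact hρ C⟩
    exact eq_of_adj_of_reachable_deleteVertex hG h (hρ C)
      (ConnectedComponent.exact (a.2.trans (ρ C).2.symm))
  refine ⟨⟨e, @fun u v => ?_⟩, he_none⟩
  rcases u with _ | ⟨C, a⟩ <;> rcases v with _ | ⟨D, b⟩
  · simp
  · rw [he_none, he_some, hroot, graft_adj_none_some]
  · rw [he_none, he_some, adj_comm, hroot, graft_adj_some_none]
  · rw [he_some, he_some]
    constructor
    · intro h
      have hab : (deleteVertex G r).Adj a.1 b.1 := h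
      obtain rfl : C = D := a.2.symm.trans <| (ConnectedComponent.sound hab.reachable).trans b.2
      exact .some_some hab
    · rintro (_ | _ | hab)
      exact hab

end DeleteVertex

/-! ### Isomorphism classes of rooted trees -/

/-- A finite rooted tree, on an arbitrary vertex type. -/
structure FiniteRootedTree where
  V : Type
  [finite : Finite V]
  graph : SimpleGraph V
  isTree : graph.IsTree
  root : V

namespace FiniteRootedTree

attribute [instance] finite

instance setoid : Setoid FiniteRootedTree where
  r s t := ∃ e : s.graph ≃g t.graph, e s.root = t.root
  iseqv :=
    { refl _ := ⟨RelIso.refl _, rfl⟩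
      symm := by
        rintro s t ⟨e, he⟩
        exact ⟨e.symm, e.symm_apply_eq.2 he.symm⟩
      trans := by
        rintro s t u ⟨e, he⟩ ⟨f, hf⟩
        exact ⟨e.trans f, (congrArg f he).trans hf⟩ }

/-- The number of vertices of a rooted tree. -/
noncomputable def size (t : FiniteRootedTree) : ℕ := Nat.card t.V

/-- The number of leaves of a rooted tree. -/
noncomputable def leaves (t : FiniteRootedTree) : ℕ := (leafSet t.graph t.root).ncard

theorem size_eq_of_equiv {s t : FiniteRootedTree} : s ≈ t → s.size = t.size := by
  rintro ⟨e, -⟩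
  exact Nat.card_congr e.toEquiv

theorem leaves_eq_of_equiv {s t : FiniteRootedTree} : s ≈ t → s.leaves = t.leaves := by
  rintro ⟨e, he⟩
  rw [leaves, leaves, ← he, ncard_leafSet_eq_of_iso]

/-- The rooted tree whose root has the trees `F i` as branches. -/
def ofBranches {ι : Type} [Finite ι] (F : ι → FiniteRootedTree) : FiniteRootedTree where
  V := Option (Σ i, (F i).V)
  graph := graft (fun i => (F i).graph) fun i => (F i).root
  isTree := graft_isTree fun i => (F i).isTree
  root := none

theorem size_ofBranches {ι : Type} [Fintype ι] (F : ι → FiniteRootedTree) :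
    (ofBranches F).size = 1 + ∑ i, (F i).size := by
  rw [size, ofBranches, Finite.card_option, Nat.card_sigma, add_comm]
  rfl

theorem leaves_ofBranches_of_isEmpty {ι : Type} [Finite ι] [IsEmpty ι] (F : ι → FiniteRootedTree) :
    (ofBranches F).leaves = 1 := by
  have : Unique (ofBranches F).V := inferInstanceAs (Unique (Option _))
  rw [leaves, leafSet_of_subsingleton, Set.ncard_univ, Nat.card_unique]

theorem leaves_ofBranches {ι : Type} [Fintype ι] [Nonempty ι] (F : ι → FiniteRootedTree) :
    (ofBranches F).leaves = ∑ i, (F i).leaves :=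
  ncard_leafSet_graft fun i => (F i).isTree.connected.preconnected

/-- The branches of a rooted tree are indexed by the components left when its root is deleted. -/
abbrev BranchIndex (t : FiniteRootedTree) : Type := (deleteVertex t.graph t.root).ConnectedComponent

noncomputable instance (t : FiniteRootedTree) : Fintype t.BranchIndex := Fintype.ofFinite _

/-- The branch `C` of a rooted tree, rooted at its vertex adjacent to the root. -/
noncomputable def branch (t : FiniteRootedTree) (C : t.BranchIndex) : FiniteRootedTree where
  V := C
  graph := C.toSimpleGraph
  isTree := by
    have hacyclic : (deleteVertex t.graph t.root).IsAcyclic :=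
      t.isTree.isAcyclic.comap ⟨Subtype.val, id⟩ Subtype.val_injective
    exact hacyclic.isTree_connectedComponent C
  root := (exists_adj_mem_connectedComponent t.isTree.connected.preconnected C).choose

theorem ofBranches_branch_equiv (t : FiniteRootedTree) : ofBranches t.branch ≈ t :=
  exists_graft_connectedComponent_iso t.isTree.isAcyclic fun C =>
    (exists_adj_mem_connectedComponent t.isTree.connected.preconnected C).choose_spec

/-- Isomorphism classes of finite rooted trees. -/
abbrev IsoClass : Type 1 := Quotient setoid

/-- The isomorphism class of a finite rooted tree. -/
def isoClass (t : FiniteRootedTree) : IsoClass := ⟦t⟧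

theorem isoClass_ofBranches_eq_iff {ι ι' : Type} [Fintype ι] [Fintype ι']
    {F : ι → FiniteRootedTree} {F' : ι' → FiniteRootedTree} :
    (ofBranches F).isoClass = (ofBranches F').isoClass ↔
      Finset.univ.val.map (fun i => (F i).isoClass) =
        Finset.univ.val.map fun i => (F' i).isoClass := by
  rw [map_univ_eq_map_univ_iff]
  constructor
  · intro h
    obtain ⟨e, he⟩ := Quotient.exact h
    obtain ⟨σ, φ, hφ⟩ := exists_iso_of_graft_iso
      (fun i => (F i).isTree.connected.preconnected)
      (fun i => (F' i).isTree.connected.preconnected) e he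
    exact ⟨σ, fun i => Quotient.sound ⟨φ i, hφ i⟩⟩
  · rintro ⟨σ, hσ⟩
    choose φ hφ using fun i => Quotient.exact (hσ i)
    exact Quotient.sound (exists_graft_iso σ φ hφ)

theorem isoClass_ofBranches_branch (t : FiniteRootedTree) :
    (ofBranches t.branch).isoClass = t.isoClass :=
  Quotient.sound t.ofBranches_branch_equiv

namespace IsoClass

/-- The number of vertices of the trees in an isomorphism class. -/
noncomputable def size : IsoClass → ℕ :=
  Quotient.lift FiniteRootedTree.size fun _ _ => size_eq_of_equiv

/-- The number of leaves of the trees in an isomorphism class. -/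
noncomputable def leaves : IsoClass → ℕ :=
  Quotient.lift FiniteRootedTree.leaves fun _ _ => leaves_eq_of_equiv

/-- The multiset of isomorphism classes of the branches at the root. -/
noncomputable def branches : IsoClass → Multiset IsoClass :=
  Quotient.lift (fun t => Finset.univ.val.map fun C => (t.branch C).isoClass) fun s t h => by
    rw [← isoClass_ofBranches_eq_iff, isoClass_ofBranches_branch, isoClass_ofBranches_branch]
    exact Quotient.sound h

theorem branches_isoClass_ofBranches {ι : Type} [Fintype ι] (F : ι → FiniteRootedTree) :
    (ofBranches F).isoClass.branches = Finset.univ.val.map fun i => (F i).isoClass :=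
  isoClass_ofBranches_eq_iff.1 (isoClass_ofBranches_branch _)

theorem exists_eq_isoClass_ofBranches (q : IsoClass) :
    ∃ (ι : Type) (_ : Fintype ι) (F : ι → FiniteRootedTree), q = (ofBranches F).isoClass := by
  induction q using Quotient.ind with | _ t
  exact ⟨t.BranchIndex, inferInstance, t.branch, t.isoClass_ofBranches_branch.symm⟩

theorem branches_bijective : Function.Bijective branches := by
  constructor
  · intro q q' h
    obtain ⟨ι, _, F, rfl⟩ := q.exists_eq_isoClass_ofBranches
    obtain ⟨ι', _, F', rfl⟩ := q'.exists_eq_isoClass_ofBranches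
    rwa [isoClass_ofBranches_eq_iff, ← branches_isoClass_ofBranches,
      ← branches_isoClass_ofBranches]
  · intro m
    induction m using Quotient.ind with | _ l
    refine ⟨(ofBranches fun i : Fin l.length => (l.get i).out).isoClass, ?_⟩
    rw [branches_isoClass_ofBranches, Fin.univ_val_map]
    simp [isoClass]

theorem size_eq_one_add_sum_branches (q : IsoClass) : q.size = 1 + (q.branches.map size).sum := by
  obtain ⟨ι, _, F, rfl⟩ := q.exists_eq_isoClass_ofBranches
  rw [branches_isoClass_ofBranches, Multiset.map_map]
  exact size_ofBranches F

theorem leaves_of_branches_eq_zero {q : IsoClass} (hq : q.branches = 0) : q.leaves = 1 := by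
  obtain ⟨ι, _, F, rfl⟩ := q.exists_eq_isoClass_ofBranches
  rw [branches_isoClass_ofBranches, Multiset.map_eq_zero, Finset.val_eq_zero,
    Finset.univ_eq_empty_iff] at hq
  exact leaves_ofBranches_of_isEmpty F

theorem leaves_eq_sum_branches {q : IsoClass} (hq : q.branches ≠ 0) :
    q.leaves = (q.branches.map leaves).sum := by
  obtain ⟨ι, _, F, rfl⟩ := q.exists_eq_isoClass_ofBranches
  rw [branches_isoClass_ofBranches, ne_eq, Multiset.map_eq_zero, Finset.val_eq_zero,
    Finset.univ_eq_empty_iff, not_isEmpty_iff] at hq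
  rw [branches_isoClass_ofBranches, Multiset.map_map]
  exact leaves_ofBranches F

end IsoClass

end FiniteRootedTree

/-- A rooted tree on `Fin n` regarded as a finite rooted tree. -/
def RTree.toFiniteRootedTree {n : ℕ} (t : RTree n) : FiniteRootedTree where
  V := Fin n
  graph := t.adj
  isTree := ⟨t.connected, t.acyclic⟩
  root := t.root

namespace RTree

variable {n : ℕ}

instance : Finite (RTree n) := by
  refine Finite.of_injective (fun t : RTree n => (t.adj, t.root)) fun s t h => ?_
  cases s
  cases t
  simpa using h

theorem size_toFiniteRootedTree (t : RTree n) : t.toFiniteRootedTree.size = n :=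
  Nat.card_fin n

theorem leaves_toFiniteRootedTree (t : RTree n) : t.toFiniteRootedTree.leaves = numLeaves t := by
  have hn : Subsingleton (Fin n) ↔ n = 1 := by
    have := t.root.pos
    rw [Fin.subsingleton_iff_le_one]
    omega
  exact Nat.card_congr (Equiv.subtypeEquivRight fun v => or_congr_left hn)

theorem isoClass_toFiniteRootedTree_eq_iff {s t : RTree n} :
    s.toFiniteRootedTree.isoClass = t.toFiniteRootedTree.isoClass ↔ treeSetoid n s t :=
  Quotient.eq

end RTree

namespace FiniteRootedTree

theorem exists_toFiniteRootedTree_equiv (t : FiniteRootedTree) :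
    ∃ s : RTree t.size, s.toFiniteRootedTree ≈ t := by
  let φ : t.V ≃ Fin t.size := Finite.equivFin t.V
  let e : t.graph ≃g t.graph.map φ.toEmbedding := SimpleGraph.Iso.map φ t.graph
  have htree : (t.graph.map φ.toEmbedding).IsTree := e.isTree_iff.1 t.isTree
  exact ⟨⟨_, htree.connected, htree.isAcyclic, φ t.root⟩, e.symm, φ.symm_apply_apply _⟩

namespace IsoClass

/-- The number of vertices and the number of leaves. -/
noncomputable def sizeLeaves (q : IsoClass) : ℕ × ℕ := (q.size, q.leaves)

theorem nonempty_quotient_equiv_fiber_sizeLeaves (n k : ℕ) : Nonempty (Quotient (Setoid.comap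
    (Subtype.val : {t : RTree n // numLeaves t = k} → RTree n) (treeSetoid n)) ≃
      {q : IsoClass // q.sizeLeaves = (n, k)}) := by
  let f (t : {t : RTree n // numLeaves t = k}) : {q : IsoClass // q.sizeLeaves = (n, k)} :=
    ⟨t.1.toFiniteRootedTree.isoClass,
      Prod.ext t.1.size_toFiniteRootedTree (t.1.leaves_toFiniteRootedTree.trans t.2)⟩
  have hf (s t) : f s = f t ↔ treeSetoid n s.1 t.1 :=
    Subtype.ext_iff.trans RTree.isoClass_toFiniteRootedTree_eq_iff
  refine ⟨Equiv.ofBijective (Quotient.lift f fun s t h => (hf s t).2 h) ⟨?_, ?_⟩⟩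
  · rintro ⟨s⟩ ⟨t⟩ h
    exact Quotient.sound ((hf s t).1 h)
  · rintro ⟨⟨t⟩, ht⟩
    obtain ⟨rfl, rfl⟩ := Prod.ext_iff.1 ht
    obtain ⟨s, hs⟩ := t.exists_toFiniteRootedTree_equiv
    exact ⟨⟦⟨s, s.leaves_toFiniteRootedTree.symm.trans (leaves_eq_of_equiv hs)⟩⟧,
      Subtype.ext (Quotient.sound hs)⟩

instance (p : ℕ × ℕ) : Finite {q : IsoClass // q.sizeLeaves = p} :=
  Finite.of_equiv _ (nonempty_quotient_equiv_fiber_sizeLeaves p.1 p.2).some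

theorem card_fiber_sizeLeaves (p : ℕ × ℕ) :
    Nat.card {q : IsoClass // q.sizeLeaves = p} = aCount p.1 p.2 :=
  (Nat.card_congr (nonempty_quotient_equiv_fiber_sizeLeaves p.1 p.2).some).symm

end IsoClass

end FiniteRootedTree

/-! ### The functional equation -/

namespace FiniteRootedTree.IsoClass

/-- The contribution `x ^ n * z ^ k` to `T(x, z)` of a class of rooted trees with `n` vertices and
`k` leaves. -/
noncomputable def weight (x z : ℝ) (q : IsoClass) : ℝ := x ^ q.size * z ^ q.leaves

variable {x z : ℝ}

theorem summable_weight_iff : Summable (weight x z) ↔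
    Summable fun p : ℕ × ℕ => (aCount p.1 p.2 : ℝ) * x ^ p.1 * z ^ p.2 := by
  simp only [mul_assoc, ← card_fiber_sizeLeaves]
  exact summable_comp_iff_of_finite_fibers (f := sizeLeaves) (g := fun p => x ^ p.1 * z ^ p.2)

theorem tsum_weight_eq_treal (h : Summable (weight x z)) : ∑' q, weight x z q = Treal x z := by
  simp only [Treal, mul_assoc, ← card_fiber_sizeLeaves]
  exact tsum_comp_of_finite_fibers (f := sizeLeaves) (g := fun p => x ^ p.1 * z ^ p.2) h

theorem weight_pow (q : IsoClass) (k : ℕ) : weight (x ^ k) (z ^ k) q = weight x z q ^ k := by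
  simp only [weight, mul_pow, ← pow_mul, mul_comm k]

theorem prod_map_weight (m : Multiset IsoClass) :
    (m.map (weight x z)).prod = x ^ (m.map size).sum * z ^ (m.map leaves).sum := by
  induction m using Multiset.induction_on with
  | empty => simp
  | cons q m ih =>
    simp only [Multiset.map_cons, Multiset.prod_cons, Multiset.sum_cons, ih, weight, pow_add]
    ring

open scoped Classical in
theorem weight_eq_mul_update (q : IsoClass) : weight x z q =
    x * Function.update (fun m => (m.map (weight x z)).prod) 0 z q.branches := by
  rw [weight, size_eq_one_add_sum_branches, pow_add, pow_one]
  by_cases hq : q.branches = 0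
  · simp [hq, leaves_of_branches_eq_zero hq]
  · rw [leaves_eq_sum_branches hq, Function.update_of_ne hq, prod_map_weight, mul_assoc]

theorem weight_zero_left (z : ℝ) (q : IsoClass) : weight 0 z q = 0 := by
  rw [weight, size_eq_one_add_sum_branches, pow_add, pow_one, zero_mul, zero_mul]

theorem summable_prod_map_weight (h : Summable (weight x z)) :
    Summable fun m : Multiset IsoClass => (m.map (weight x z)).prod := by
  rcases eq_or_ne x 0 with rfl | hx
  · refine summable_of_ne_finset_zero (s := {0}) fun m hm => ?_
    obtain ⟨q, hq⟩ := Multiset.exists_mem_of_ne_zero (Finset.notMem_singleton.1 hm)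
    exact Multiset.prod_eq_zero (Multiset.mem_map.2 ⟨q, hq, weight_zero_left z q⟩)
  · classical
    have hupdate : Summable (Function.update
        (fun m : Multiset IsoClass => (m.map (weight x z)).prod) 0 z) := by
      rw [← (Equiv.ofBijective branches branches_bijective).summable_iff,
        ← summable_mul_left_iff hx]
      exact h.congr weight_eq_mul_update
    simpa only [Function.update_idem, Function.update_eq_self] using
      hupdate.update 0 (Multiset.map (weight x z) 0).prod

theorem tsum_weight_eq_mul_tsum_prod_map (h : Summable (weight x z)) : ∑' q, weight x z q =
    x * (z - 1 + ∑' m : Multiset IsoClass, (m.map (weight x z)).prod) := by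
  classical
  have hupdate := (summable_prod_map_weight h).hasSum.update 0 z
  have hbranches := (Equiv.ofBijective branches branches_bijective).hasSum_iff.2 hupdate
  rw [Multiset.map_zero, Multiset.prod_zero] at hbranches
  rw [tsum_congr weight_eq_mul_update]
  exact (hbranches.mul_left x).tsum_eq

theorem abs_weight_lt_one (h : Summable (weight x z)) (q : IsoClass) : |weight x z q| < 1 :=
  norm_lt_one_of_summable_prod_map (summable_prod_map_weight h).norm q

theorem treal_pow_eq_tsum_weight_pow (h : Summable (weight x z)) (k : ℕ) :
    Treal (x ^ (k + 1)) (z ^ (k + 1)) = ∑' q, weight x z q ^ (k + 1) := by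
  simp only [← weight_pow]
  refine (tsum_weight_eq_treal (h.abs.of_norm_bounded fun q => ?_)).symm
  rw [weight_pow, norm_pow]
  exact pow_le_of_le_one (norm_nonneg _) (abs_weight_lt_one h q).le k.succ_ne_zero

end FiniteRootedTree.IsoClass

open FiniteRootedTree.IsoClass

theorem summable_aCount_of_lt_rFun {z x : ℝ} (hz : 0 ≤ z) (hx : 0 ≤ x) (hxr : x < rFun z) :
    Summable fun p : ℕ × ℕ => (aCount p.1 p.2 : ℝ) * x ^ p.1 * z ^ p.2 := by
  have hne : {x : ℝ | 0 < x ∧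
      Summable fun p : ℕ × ℕ => (aCount p.1 p.2 : ℝ) * x ^ p.1 * z ^ p.2}.Nonempty := by
    by_contra! hempty
    rw [rFun, hempty, Real.sSup_empty] at hxr
    exact hxr.not_ge hx
  obtain ⟨y, ⟨-, hy⟩, hxy⟩ := exists_lt_of_lt_csSup hne hxr
  exact hy.of_nonneg_of_le (fun p => by positivity) fun p => by gcongr

theorem functional_equation_general (x z : ℝ)
    (h : Summable fun p : ℕ × ℕ => (aCount p.1 p.2 : ℝ) * x ^ p.1 * z ^ p.2) :
    Summable (fun k : ℕ => |Treal (x ^ (k + 1)) (z ^ (k + 1)) / (k + 1)|) ∧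
    Treal x z - z * x + x =
      x * Real.exp (∑' k : ℕ, Treal (x ^ (k + 1)) (z ^ (k + 1)) / (k + 1)) := by
  have hweight : Summable (weight x z) := summable_weight_iff.2 h
  simp only [treal_pow_eq_tsum_weight_pow hweight]
  constructor
  · exact (hasSum_tsum_pow_div_of_summable hweight (abs_weight_lt_one hweight)).summable.abs
  · rw [← tsum_prod_map_eq_exp (summable_prod_map_weight hweight).norm,
      ← tsum_weight_eq_treal hweight, tsum_weight_eq_mul_tsum_prod_map hweight]
    ring

/-- The Pólya-type functional equation
`T(x,z) − zx + x = x·exp(Σ_{k≥1} T(x^k,z^k)/k)`, together with the absolute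
convergence of the series in the exponent, for `0 < x < r(z)`, `z > 0`. -/
theorem functional_equation (z x : ℝ) (hz : 0 < z) (hx0 : 0 < x)
    (hxr : x < rFun z) :
    Summable (fun k : ℕ => |Treal (x ^ (k + 1)) (z ^ (k + 1)) / (k + 1)|) ∧
    Treal x z - z * x + x =
      x * Real.exp (∑' k : ℕ, Treal (x ^ (k + 1)) (z ^ (k + 1)) / (k + 1)) :=
  functional_equation_general x z (summable_aCount_of_lt_rFun hz.le hx0.le hxr)
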